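/- arXiv:1212.1997 — 4 statements merged into one kernel-verified Lean document; each statement's English description precedes it below -/
import Mathlib

section
/- Let d ≥ 1 and suppose g satisfies condition (R-8) with constants C > 0, p ≥ 3. Then the function G − G' on M_d × M_d is continuous and there exists a constant K, depending only on C, p and d, such that |G(x,y) − G'(x,y)| ≤ K (1 + ‖x‖ + ‖y‖)^{p−2} ‖y‖² for all x, y ∈ M_d. -/
open MeasureTheory

/-- `Md d` : the space of real `d × d` matrices with the Frobenius norm,
realized as the Euclidean space indexed by the entries. -/
abbrev Md (d : ℕ) := EuclideanSpace ℝ (Fin d × Fin d)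

/-- Condition (R-8): `g` is `C³` and `‖D^j g(x)‖ ≤ C (1 + ‖x‖^{p−j})` for `j = 0,1,2,3`. -/
def R8 {d : ℕ} (g : Md d → ℝ) (C p : ℝ) : Prop :=
  ContDiff ℝ 3 g ∧
    ∀ j : ℕ, j ≤ 3 → ∀ x : Md d, ‖iteratedFDeriv ℝ j g x‖ ≤ C * (1 + ‖x‖ ^ (p - j))

/-- `G g x y = ∫_0^1 ( g(x + w y) − w g(x + y) − (1 − w) g(x) ) dw`. -/
noncomputable def G {d : ℕ} (g : Md d → ℝ) (x y : Md d) : ℝ :=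
  ∫ w in (0:ℝ)..1, (g (x + w • y) - w * g (x + y) - (1 - w) * g x)

/-- Second partial derivative `∂²_{a,b} g (x)` with respect to the entries `a` and `b`. -/
noncomputable def pd2 {d : ℕ} (g : Md d → ℝ) (x : Md d) (a b : Fin d × Fin d) : ℝ :=
  iteratedFDeriv ℝ 2 g x ![EuclideanSpace.single a 1, EuclideanSpace.single b 1]

/-- `G' g x y = −(1/8) Σ_{jk,lm} ∫_0^1 ( ∂²_{jk,lm} g(x) + ∂²_{jk,lm} g(x + (1−w) y) )
w² y^{jk} y^{lm} dw`. -/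
noncomputable def G' {d : ℕ} (g : Md d → ℝ) (x y : Md d) : ℝ :=
  -(1/8) * ∑ a : Fin d × Fin d, ∑ b : Fin d × Fin d,
    ∫ w in (0:ℝ)..1, (pd2 g x a b + pd2 g (x + (1 - w) • y) a b) * w ^ 2 * y a * y b

lemma aux_pd2_cont {d : ℕ} (g : Md d → ℝ) (hg : ContDiff ℝ 3 g) (a b : Fin d × Fin d) :
    Continuous (fun x => pd2 g x a b) := by
  have h : Continuous (iteratedFDeriv ℝ 2 g) := hg.continuous_iteratedFDeriv (by norm_cast)
  unfold pd2
  exact (ContinuousMultilinearMap.apply ℝ (fun _ : Fin 2 => Md d) ℝ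
    ![EuclideanSpace.single a 1, EuclideanSpace.single b 1]).continuous.comp h

lemma aux_pd2_le {d : ℕ} (g : Md d → ℝ) (x : Md d) (a b : Fin d × Fin d) :
    |pd2 g x a b| ≤ ‖iteratedFDeriv ℝ 2 g x‖ := by
  have h := (iteratedFDeriv ℝ 2 g x).le_opNorm
    ![EuclideanSpace.single a 1, EuclideanSpace.single b 1]
  simpa [pd2, Fin.prod_univ_two] using h

lemma aux_taylor {d : ℕ} (g : Md d → ℝ) (hg : ContDiff ℝ 3 g) (x y : Md d) (B : ℝ)
    (hB : ∀ z, ‖z‖ ≤ ‖x‖ + ‖y‖ → ‖iteratedFDeriv ℝ 2 g z‖ ≤ B) (h : Md d) (hh : ‖h‖ ≤ ‖y‖) :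
    |g (x + h) - g x - fderiv ℝ g x h| ≤ B * ‖y‖ * ‖h‖ := by
  have hconv : Convex ℝ (Metric.closedBall x ‖y‖) := convex_closedBall _ _
  have hx : x ∈ Metric.closedBall x ‖y‖ := Metric.mem_closedBall_self (norm_nonneg _)
  have hxh : x + h ∈ Metric.closedBall x ‖y‖ := by simpa [dist_eq_norm] using hh
  have hnorm : ∀ z ∈ Metric.closedBall x ‖y‖, ‖z‖ ≤ ‖x‖ + ‖y‖ := by
    intro z hz
    rw [mem_closedBall_iff_norm] at hz
    have := norm_le_norm_add_norm_sub' z x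
    linarith
  have hB0 : 0 ≤ B := (norm_nonneg _).trans (hB x (by linarith [norm_nonneg y]))
  have hd1 : Differentiable ℝ g := hg.differentiable (by norm_num)
  have hd2 : Differentiable ℝ (fderiv ℝ g) :=
    (hg.fderiv_right (m := 2) (by norm_num)).differentiable (by norm_num)
  have key : ∀ z ∈ Metric.closedBall x ‖y‖, ‖fderiv ℝ g z - fderiv ℝ g x‖ ≤ B * ‖y‖ := by
    intro z hz
    have := hconv.norm_image_sub_le_of_norm_fderiv_le (𝕜 := ℝ) (f := fderiv ℝ g) (C := B)
      (fun w _ => hd2 w) (fun w hw => by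
        have h2 := hB w (hnorm w hw)
        rwa [← norm_iteratedFDeriv_fderiv, ← norm_iteratedFDeriv_fderiv, norm_iteratedFDeriv_zero] at h2) hx hz
    refine this.trans ?_
    rw [mem_closedBall_iff_norm] at hz
    gcongr
  have := hconv.norm_image_sub_le_of_norm_fderiv_le' (𝕜 := ℝ) (f := g)
    (fun w _ => hd1 w) key hx hxh
  simpa using this

/-- If `g` satisfies (R-8) with constants `C > 0`, `p ≥ 3`, then `G − G'` is continuous on
`M_d × M_d` and `|G(x,y) − G'(x,y)| ≤ K (1 + ‖x‖ + ‖y‖)^{p−2} ‖y‖²` for a constant `K`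
depending only on `C`, `p`, `d`. -/
theorem stmt2 (d : ℕ) (hd : 1 ≤ d) (C p : ℝ) (hC : 0 < C) (hp : 3 ≤ p) :
    ∃ K : ℝ, ∀ g : Md d → ℝ, R8 g C p →
      Continuous (fun q : Md d × Md d => G g q.1 q.2 - G' g q.1 q.2) ∧
      ∀ x y : Md d, |G g x y - G' g x y| ≤ K * (1 + ‖x‖ + ‖y‖) ^ (p - 2) * ‖y‖ ^ 2 := by
  set n : ℝ := (Fintype.card (Fin d × Fin d) : ℝ) with hn
  refine ⟨4 * C + (1/8) * (n * (n * (4 * C))), fun g ⟨hg, hb⟩ => ⟨?_, ?_⟩⟩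
  · have hgc := hg.continuous
    refine Continuous.sub ?_ ?_
    · unfold G
      apply intervalIntegral.continuous_parametric_intervalIntegral_of_continuous'
      simp only [Function.uncurry_def]
      fun_prop
    · unfold G'
      refine continuous_const.mul (continuous_finsetSum _ fun a _ => continuous_finsetSum _ fun b _ => ?_)
      apply intervalIntegral.continuous_parametric_intervalIntegral_of_continuous'
      have := aux_pd2_cont g hg a b
      have h1 : Continuous fun z : (Md d × Md d) × ℝ => pd2 g z.1.1 a b :=
        this.comp (by fun_prop)
      have h2 : Continuous fun z : (Md d × Md d) × ℝ => pd2 g (z.1.1 + (1 - z.2) • z.1.2) a b :=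
        this.comp (by fun_prop)
      simp only [Function.uncurry_def]
      fun_prop
  · intro x y
    set R : ℝ := (1 + ‖x‖ + ‖y‖) ^ (p - 2) with hR
    have hx0 := norm_nonneg x
    have hy0 := norm_nonneg y
    set B : ℝ := 2 * C * R with hBdef
    have hB : ∀ z, ‖z‖ ≤ ‖x‖ + ‖y‖ → ‖iteratedFDeriv ℝ 2 g z‖ ≤ B := by
      intro z hz
      have h1 := hb 2 (by norm_num) z
      have h2 : ‖z‖ ^ (p - 2) ≤ R := Real.rpow_le_rpow (norm_nonneg _) (by linarith) (by linarith)
      have h3 : 1 ≤ R := Real.one_le_rpow (by linarith) (by linarith)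
      push_cast at h1
      refine h1.trans ?_
      rw [hBdef]
      nlinarith
    have hB0 : 0 ≤ B := (norm_nonneg _).trans (hB x (by linarith))
    have hG : |G g x y| ≤ 2 * B * ‖y‖ ^ 2 := by
      have := intervalIntegral.norm_integral_le_of_norm_le_const (a := 0) (b := 1)
        (f := fun w : ℝ => g (x + w • y) - w * g (x + y) - (1 - w) * g x) (C := 2 * B * ‖y‖ ^ 2) ?_
      · simpa [G] using this
      intro w hw
      rw [Set.uIoc_of_le zero_le_one] at hw
      obtain ⟨hw0, hw1⟩ := hw
      have e : ‖w • y‖ = w * ‖y‖ := by rw [norm_smul, Real.norm_of_nonneg hw0.le]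
      have t1 := aux_taylor g hg x y B hB (w • y) (by rw [e]; nlinarith)
      have t2 := aux_taylor g hg x y B hB y le_rfl
      rw [e, map_smul, smul_eq_mul] at t1
      have hBy : 0 ≤ B * ‖y‖ * ‖y‖ := by positivity
      have t1' : |g (x + w • y) - g x - w * fderiv ℝ g x y| ≤ B * ‖y‖ * ‖y‖ :=
        t1.trans (by nlinarith)
      have t2' : |w * (g (x + y) - g x - fderiv ℝ g x y)| ≤ B * ‖y‖ * ‖y‖ := by
        rw [abs_mul, abs_of_pos hw0]
        nlinarith [abs_nonneg (g (x + y) - g x - fderiv ℝ g x y)]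
      rw [Real.norm_eq_abs]
      rw [abs_le] at *
      constructor <;> nlinarith [t1'.1, t1'.2, t2'.1, t2'.2]
    have hI : ∀ a b : Fin d × Fin d,
        |∫ w in (0:ℝ)..1, (pd2 g x a b + pd2 g (x + (1 - w) • y) a b) * w ^ 2 * y a * y b|
          ≤ 2 * B * ‖y‖ ^ 2 := by
      intro a b
      have := intervalIntegral.norm_integral_le_of_norm_le_const (a := 0) (b := 1)
        (f := fun w : ℝ => (pd2 g x a b + pd2 g (x + (1 - w) • y) a b) * w ^ 2 * y a * y b)
        (C := 2 * B * ‖y‖ ^ 2) ?_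
      · simpa using this
      intro w hw
      rw [Set.uIoc_of_le zero_le_one] at hw
      obtain ⟨hw0, hw1⟩ := hw
      have p1 := (aux_pd2_le g x a b).trans (hB x (by linarith))
      have p2 := (aux_pd2_le g (x + (1 - w) • y) a b).trans (hB _ (by
        refine (norm_add_le _ _).trans ?_
        rw [norm_smul, Real.norm_of_nonneg (by linarith)]
        nlinarith))
      have p3 : |pd2 g x a b + pd2 g (x + (1 - w) • y) a b| ≤ 2 * B :=
        (abs_add_le _ _).trans (by linarith)
      have ya : |y a| ≤ ‖y‖ := PiLp.norm_apply_le y a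
      have yb : |y b| ≤ ‖y‖ := PiLp.norm_apply_le y b
      have hw2 : |w ^ 2| ≤ 1 := by rw [abs_of_nonneg (by positivity)]; nlinarith
      rw [Real.norm_eq_abs, abs_mul, abs_mul, abs_mul]
      calc _ ≤ 2 * B * 1 * ‖y‖ * ‖y‖ := by gcongr
        _ = _ := by ring
    have hG' : |G' g x y| ≤ (1/8) * (n * (n * (2 * B * ‖y‖ ^ 2))) := by
      unfold G'
      rw [abs_mul, show |(-(1/8) : ℝ)| = 1/8 by rw [abs_neg]; norm_num]
      gcongr
      refine (Finset.abs_sum_le_sum_abs _ _).trans ?_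
      refine (Finset.sum_le_card_nsmul _ _ (n * (2 * B * ‖y‖ ^ 2)) fun a _ => ?_).trans_eq ?_
      · refine (Finset.abs_sum_le_sum_abs _ _).trans ?_
        refine (Finset.sum_le_card_nsmul _ _ (2 * B * ‖y‖ ^ 2) fun b _ => hI a b).trans_eq ?_
        rw [nsmul_eq_mul, Finset.card_univ]
      · rw [nsmul_eq_mul, Finset.card_univ]
    refine (abs_sub _ _).trans ((add_le_add hG hG').trans_eq ?_)
    rw [hBdef]; ring
end

section
/- Let d ≥ 1, suppose g satisfies condition (R-8) with constants C > 0, p ≥ 3, and define R(x,y) := Σ_{j,k,l,m=1}^d ∂²_{jk,lm} g(x) (y^{jk} − x^{jk})(y^{lm} − x^{lm}). Then there exists a constant K, depending only on C, p and d, such that for all x, y, x', y' ∈ M_d: |R(x,y) − R(x',y')| ≤ K (1 + ‖x'‖ + ‖y'‖)^{p−1} ( ‖x − x'‖ + ‖y − y'‖ ) + K ‖x − x'‖^p + K ‖y − y'‖^p. -/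
open MeasureTheory

/-- `R(x,y) = Σ_{jk,lm} ∂²_{jk,lm} g(x) (y^{jk} − x^{jk})(y^{lm} − x^{lm})`. -/
noncomputable def Rg {d : ℕ} (g : Md d → ℝ) (x y : Md d) : ℝ :=
  ∑ a : Fin d × Fin d, ∑ b : Fin d × Fin d, pd2 g x a b * (y a - x a) * (y b - x b)

theorem aux_Rg {d : ℕ} (g : Md d → ℝ) (x y : Md d) :
    Rg g x y = fderiv ℝ (fderiv ℝ g) x (y - x) (y - x) := by
  have key : ∀ u : Md d, u = ∑ a, u a • (EuclideanSpace.single a (1:ℝ) : Md d) := by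
    intro u
    ext i
    simp [Finset.sum_apply, Pi.single_apply]
  conv_rhs => rw [key (y - x)]
  simp only [Rg, pd2, iteratedFDeriv_two_apply, map_sum, map_smul,
    sum_apply, smul_apply, Finset.mul_sum, smul_eq_mul]
  rw [Finset.sum_comm]
  refine Finset.sum_congr rfl fun a _ => Finset.sum_congr rfl fun b _ => ?_
  simp
  ring

theorem aux_num {p M a b : ℝ} (hp : 3 ≤ p) (hM : 1 ≤ M) (ha : 0 ≤ a) (hb : 0 ≤ b) :
    (M + (a + b)) ^ (p - 1) * (a + b) ≤
      (2:ℝ) ^ p * (2:ℝ) ^ p * (M ^ (p - 1) * (a + b) + a ^ p + b ^ p) := by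
  have h2 : (1:ℝ) ≤ 2 ^ p := Real.one_le_rpow (by norm_num) (by linarith)
  have h21 : (2:ℝ) ^ (p-1) ≤ 2 ^ p := Real.rpow_le_rpow_of_exponent_le (by norm_num) (by linarith)
  have hs : 0 ≤ a + b := by positivity
  have hMp : 0 ≤ M ^ (p-1) := by positivity
  have hap : 0 ≤ a ^ p := by positivity
  have hbp : 0 ≤ b ^ p := by positivity
  have h4 : (2:ℝ)^p ≤ 2 ^ p * 2 ^ p := by nlinarith
  have hsp : (a + b) ^ p ≤ 2 ^ p * (a ^ p + b ^ p) := by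
    rcases le_total a b with h | h
    · calc (a + b) ^ p ≤ (2 * b) ^ p := Real.rpow_le_rpow hs (by linarith) (by linarith)
        _ = 2 ^ p * b ^ p := Real.mul_rpow (by norm_num) hb
        _ ≤ _ := by gcongr; linarith
    · calc (a + b) ^ p ≤ (2 * a) ^ p := Real.rpow_le_rpow hs (by linarith) (by linarith)
        _ = 2 ^ p * a ^ p := Real.mul_rpow (by norm_num) ha
        _ ≤ _ := by gcongr; linarith
  rcases le_total (a + b) M with h | h
  · calc (M + (a + b)) ^ (p - 1) * (a + b) ≤ (2 * M) ^ (p - 1) * (a + b) := by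
          gcongr
          · linarith
          · linarith
      _ = 2 ^ (p-1) * (M ^ (p - 1) * (a + b)) := by
          rw [Real.mul_rpow (by norm_num) (by linarith)]; ring
      _ ≤ (2 ^ p * 2 ^ p) * (M ^ (p - 1) * (a + b)) := by
          gcongr
          linarith
      _ ≤ _ := by gcongr; linarith
  · calc (M + (a + b)) ^ (p - 1) * (a + b) ≤ (2 * (a + b)) ^ (p - 1) * (a + b) := by
          gcongr
          · linarith
          · linarith
      _ = 2 ^ (p-1) * ((a + b) ^ (p - 1) * (a + b)) := by
          rw [Real.mul_rpow (by norm_num) hs]; ring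
      _ = 2 ^ (p-1) * (a + b) ^ p := by
          have h0 : a + b ≠ 0 := by linarith
          rw [Real.rpow_sub_one h0, div_mul_cancel₀ _ h0]
      _ ≤ 2 ^ p * (2 ^ p * (a ^ p + b ^ p)) := by gcongr
      _ ≤ _ := by
          rw [← mul_assoc]
          gcongr
          have := mul_nonneg hMp hs
          linarith

theorem aux_pow {t T q : ℝ} (ht : 0 ≤ t) (htT : t ≤ T) (hT : 1 ≤ T) (hq : 0 ≤ q) :
    1 + t ^ q ≤ 2 * T ^ q := by
  have h1 := Real.one_le_rpow hT hq
  have h2 := Real.rpow_le_rpow ht htT hq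
  linarith

set_option maxSynthPendingDepth 3 in
theorem aux_main {E : Type*} [NormedAddCommGroup E] [NormedSpace ℝ E] (C p : ℝ) (hC : 0 < C)
    (hp : 3 ≤ p) (g : E → ℝ) (hcd : ContDiff ℝ 3 g)
    (hbd : ∀ j : ℕ, j ≤ 3 → ∀ x : E, ‖iteratedFDeriv ℝ j g x‖ ≤ C * (1 + ‖x‖ ^ (p - j)))
    (x y x' y' : E) :
    |fderiv ℝ (fderiv ℝ g) x (y - x) (y - x) - fderiv ℝ (fderiv ℝ g) x' (y' - x') (y' - x')| ≤
      6 * C * (2 ^ p * 2 ^ p) * (1 + ‖x'‖ + ‖y'‖) ^ (p - 1) * (‖x - x'‖ + ‖y - y'‖) +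
            6 * C * (2 ^ p * 2 ^ p) * ‖x - x'‖ ^ p + 6 * C * (2 ^ p * 2 ^ p) * ‖y - y'‖ ^ p := by
  set F := fderiv ℝ (fderiv ℝ g) with hF
  have hb2 : ∀ z, ‖F z‖ ≤ C * (1 + ‖z‖ ^ (p - 2)) := by
    intro z
    have h := hbd 2 (by norm_num) z
    rw [← norm_iteratedFDeriv_fderiv, norm_iteratedFDeriv_one] at h
    exact_mod_cast h
  have hb3 : ∀ z, ‖fderiv ℝ F z‖ ≤ C * (1 + ‖z‖ ^ (p - 3)) := by
    intro z
    have h := hbd 3 (by norm_num) z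
    rw [← norm_iteratedFDeriv_fderiv, ← norm_iteratedFDeriv_fderiv, norm_iteratedFDeriv_one] at h
    exact_mod_cast h
  have hd1 : ContDiff ℝ 2 (fderiv ℝ g) := hcd.fderiv_right (by norm_num)
  have hd2 : ContDiff ℝ 1 F := hd1.fderiv_right (by norm_num)
  have hdiff : Differentiable ℝ F := hd2.differentiable (by norm_num)
  set a := ‖x - x'‖ with ha
  set b := ‖y - y'‖ with hb
  set M := 1 + ‖x'‖ + ‖y'‖ with hM
  have ha0 : 0 ≤ a := norm_nonneg _
  have hb0 : 0 ≤ b := norm_nonneg _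
  have hx0 := norm_nonneg x'
  have hy0 := norm_nonneg y'
  have hM1 : 1 ≤ M := by linarith
  set T := M + (a + b) with hT
  have hT1 : 1 ≤ T := by linarith
  have hxT : ‖x‖ ≤ T := by
    have := norm_add_le x' (x - x')
    rw [add_sub_cancel] at this
    linarith
  have hxT' : ‖x'‖ ≤ T := by linarith
  have hu' : ‖y' - x'‖ ≤ T := by
    have := norm_sub_le y' x'
    linarith
  have huu : ‖(y - x) - (y' - x')‖ ≤ a + b := by
    have e : (y - x) - (y' - x') = (y - y') - (x - x') := by abel
    rw [e]
    have := norm_sub_le (y - y') (x - x')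
    linarith
  have hu : ‖y - x‖ ≤ T := by
    have := norm_add_le (y' - x') ((y - x) - (y' - x'))
    rw [add_sub_cancel] at this
    have := norm_sub_le y' x'
    linarith
  generalize y - x = u at *
  generalize y' - x' = u' at *
  have hFT : ‖F x'‖ ≤ 2 * C * T ^ (p - 2) := by
    refine (hb2 x').trans ?_
    have := aux_pow (norm_nonneg x') hxT' hT1 (by linarith : 0 ≤ p - 2)
    nlinarith
  have hFd : ‖F x - F x'‖ ≤ 2 * C * T ^ (p - 3) * a := by
    refine (convex_closedBall (0 : E) T).norm_image_sub_le_of_norm_fderiv_le (𝕜 := ℝ)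
      (fun z _ => hdiff z) (fun z hz => ?_) (by simpa using hxT') (by simpa using hxT)
    have hz' : ‖z‖ ≤ T := by simpa using hz
    refine (hb3 z).trans ?_
    have := aux_pow (norm_nonneg z) hz' hT1 (by linarith : 0 ≤ p - 3)
    nlinarith
  have hdec : F x u u - F x' u' u' =
      (F x - F x') u u + F x' (u - u') u + F x' u' (u - u') := by
    simp
  have hT0 : 0 < T := by linarith
  have e3 : T ^ (p - 3) * T * T = T ^ (p - 1) := by
    rw [mul_assoc, ← sq, ← Real.rpow_natCast T 2, ← Real.rpow_add hT0]
    congr 1; push_cast; ring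
  have e2 : T ^ (p - 2) * T = T ^ (p - 1) := by
    nth_rewrite 2 [← Real.rpow_one T]
    rw [← Real.rpow_add hT0]
    congr 1; ring
  have b1 : ‖(F x - F x') u u‖ ≤ 2 * C * T ^ (p - 1) * (a + b) := by
    calc _ ≤ ‖F x - F x'‖ * ‖u‖ * ‖u‖ := (F x - F x').le_opNorm₂ u u
      _ ≤ (2 * C * T ^ (p - 3) * (a + b)) * T * T := by
        gcongr
        refine hFd.trans ?_
        gcongr
        linarith
      _ = _ := by rw [← e3]; ring
  have b2 : ‖F x' (u - u') u‖ ≤ 2 * C * T ^ (p - 1) * (a + b) := by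
    calc _ ≤ ‖F x'‖ * ‖u - u'‖ * ‖u‖ := (F x').le_opNorm₂ _ _
      _ ≤ (2 * C * T ^ (p - 2)) * (a + b) * T := by gcongr
      _ = _ := by rw [← e2]; ring
  have b3 : ‖F x' u' (u - u')‖ ≤ 2 * C * T ^ (p - 1) * (a + b) := by
    calc _ ≤ ‖F x'‖ * ‖u'‖ * ‖u - u'‖ := (F x').le_opNorm₂ _ _
      _ ≤ (2 * C * T ^ (p - 2)) * T * (a + b) := by gcongr
      _ = _ := by rw [← e2]; ring
  have hfin : |F x u u - F x' u' u'| ≤ 6 * C * (T ^ (p - 1) * (a + b)) := by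
    rw [hdec, ← Real.norm_eq_abs]
    refine (norm_add₃_le).trans ?_
    linarith
  have hn := aux_num hp hM1 ha0 hb0
  have := mul_le_mul_of_nonneg_left hn (by positivity : 0 ≤ 6 * C)
  refine hfin.trans (this.trans (le_of_eq ?_))
  ring

/-- If `g` satisfies (R-8) with constants `C > 0`, `p ≥ 3`, then there is a constant `K`
(depending only on `C`, `p`, `d`) such that for all `x, y, x', y'`:
`|R(x,y) − R(x',y')| ≤ K (1 + ‖x'‖ + ‖y'‖)^{p−1} (‖x − x'‖ + ‖y − y'‖)
  + K ‖x − x'‖^p + K ‖y − y'‖^p`. -/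
theorem stmt8 (d : ℕ) (hd : 1 ≤ d) (C p : ℝ) (hC : 0 < C) (hp : 3 ≤ p) :
    ∃ K : ℝ, ∀ g : Md d → ℝ, R8 g C p →
      ∀ x y x' y' : Md d,
        |Rg g x y - Rg g x' y'| ≤
          K * (1 + ‖x'‖ + ‖y'‖) ^ (p - 1) * (‖x - x'‖ + ‖y - y'‖) +
            K * ‖x - x'‖ ^ p + K * ‖y - y'‖ ^ p := by
  refine ⟨6 * C * (2 ^ p * 2 ^ p), ?_⟩
  intro g hg x y x' y'
  rw [aux_Rg, aux_Rg]
  exact aux_main C p hC hp g hg.1 hg.2 x y x' y'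
end

section
/- Let (Ω, F, (F_t)_{t≥0}, P) be a filtered probability space and let Z be a bounded, adapted, ℝ^q-valued process with càdlàg paths. For t ≥ 0 and s ≥ 0 set η(Z)_{t,s} := sqrt( E( sup_{0 < u ≤ s} ‖Z_{t+u} − Z_t‖² | F_t ) ). Then for every t > 0, every sequence (Δ_n) of positive reals with Δ_n → 0, and every sequence (v_n) of nonnegative reals with v_n → 0, one has Δ_n · E( Σ_{i=1}^{⌊t/Δ_n⌋} η(Z)_{(i−1)Δ_n, v_n} ) → 0 as n → ∞. -/
open MeasureTheory Filter

/-- A càdlàg function: right-continuous everywhere, with left limits everywhere. -/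
def Cadlag {E : Type*} [TopologicalSpace E] (f : ℝ → E) : Prop :=
  (∀ t : ℝ, ContinuousWithinAt f (Set.Ici t) t) ∧
    (∀ t : ℝ, ∃ l : E, Tendsto f (nhdsWithin t (Set.Iio t)) (nhds l))

/-- `η(Z)_{t,s} = sqrt( E( sup_{0 < u ≤ s} ‖Z_{t+u} − Z_t‖² | F_t ) )`. -/
noncomputable def eta {Ω : Type*} {m0 : MeasurableSpace Ω} (μ : Measure Ω)
    (F : Filtration ℝ m0) {E : Type*} [NormedAddCommGroup E]
    (Z : ℝ → Ω → E) (t s : ℝ) (ω : Ω) : ℝ :=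
  Real.sqrt ((μ[(fun ω' => ⨆ u ∈ Set.Ioc (0:ℝ) s, ‖Z (t + u) ω' - Z t ω'‖ ^ 2) | F t]) ω)


/-- The running squared oscillation of a path. -/
noncomputable def gOsc {E : Type*} [NormedAddCommGroup E] (f : ℝ → E) (r v : ℝ) : ℝ :=
  ⨆ u ∈ Set.Ioc (0:ℝ) v, ‖f (r + u) - f r‖ ^ 2

lemma gOsc_nonneg {E : Type*} [NormedAddCommGroup E] (f : ℝ → E) (r v : ℝ) : 0 ≤ gOsc f r v :=
  Real.iSup_nonneg fun _ => Real.iSup_nonneg fun _ => by positivity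

lemma gOsc_le {E : Type*} [NormedAddCommGroup E] (f : ℝ → E) (r v c : ℝ) (hc : 0 ≤ c)
    (h : ∀ u ∈ Set.Ioc (0:ℝ) v, ‖f (r + u) - f r‖ ^ 2 ≤ c) : gOsc f r v ≤ c :=
  Real.iSup_le (fun u => Real.iSup_le (fun hu => h u hu) hc) hc

lemma sq_le_bd {E : Type*} [NormedAddCommGroup E] (f : ℝ → E) (B : ℝ) (hB : ∀ t, ‖f t‖ ≤ B)
    (a b : ℝ) : ‖f a - f b‖ ^ 2 ≤ (2 * B) ^ 2 := by
  have h1 := norm_sub_le (f a) (f b)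
  have h2 := hB a
  have h3 := hB b
  gcongr
  linarith

lemma gOsc_le_bd {E : Type*} [NormedAddCommGroup E] (f : ℝ → E) (B : ℝ) (hB : ∀ t, ‖f t‖ ≤ B)
    (r v : ℝ) : gOsc f r v ≤ (2 * B) ^ 2 :=
  gOsc_le f r v _ (by positivity) fun _ _ => sq_le_bd f B hB _ _

lemma le_gOsc {E : Type*} [NormedAddCommGroup E] (f : ℝ → E) (B : ℝ) (hB : ∀ t, ‖f t‖ ≤ B)
    (r v u : ℝ) (hu : u ∈ Set.Ioc (0:ℝ) v) : ‖f (r + u) - f r‖ ^ 2 ≤ gOsc f r v := by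
  have hb : BddAbove (Set.range fun u => ⨆ (_ : u ∈ Set.Ioc (0:ℝ) v), ‖f (r + u) - f r‖ ^ 2) := by
    refine ⟨(2 * B) ^ 2, ?_⟩
    rintro _ ⟨u, rfl⟩
    exact Real.iSup_le (fun _ => sq_le_bd f B hB _ _) (by positivity)
  have := le_ciSup hb u
  simp only [ciSup_pos hu] at this
  exact this

lemma gOsc_measurable {Ω : Type*} [MeasurableSpace Ω] {q : ℕ}
    (Z : ℝ → Ω → EuclideanSpace ℝ (Fin q)) (hZ : ∀ t, Measurable (Z t))
    (B : ℝ) (hB : ∀ t ω, ‖Z t ω‖ ≤ B)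
    (hc : ∀ ω t, ContinuousWithinAt (fun t => Z t ω) (Set.Ici t) t) (r v : ℝ) :
    Measurable (fun ω => gOsc (fun t => Z t ω) r v) := by
  apply measurable_of_Ioi
  intro a
  by_cases ha : a < 0
  · convert MeasurableSet.univ
    ext ω
    simp only [Set.mem_preimage, Set.mem_Ioi, Set.mem_univ, iff_true]
    exact ha.trans_le (gOsc_nonneg _ _ _)
  push Not at ha
  have hM : ∀ u, MeasurableSet {ω | a < ‖Z (r + u) ω - Z r ω‖ ^ 2} := fun u =>
    measurableSet_lt measurable_const ((((hZ _).sub (hZ _)).norm).pow_const 2)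
  have : (fun ω => gOsc (fun t => Z t ω) r v) ⁻¹' Set.Ioi a =
      (⋃ p : {p : ℚ // (p : ℝ) ∈ Set.Ioc (0:ℝ) v}, {ω | a < ‖Z (r + (p.1 : ℝ)) ω - Z r ω‖ ^ 2})
      ∪ (⋃ _ : v ∈ Set.Ioc (0:ℝ) v, {ω | a < ‖Z (r + v) ω - Z r ω‖ ^ 2}) := by
    ext ω
    simp only [Set.mem_preimage, Set.mem_Ioi, Set.mem_union, Set.mem_iUnion, Set.mem_ofPred_eq]
    constructor
    · intro h
      by_contra hn
      push Not at hn
      refine absurd h (not_lt.2 (gOsc_le _ _ _ _ ha ?_))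
      intro u hu
      by_contra hlt
      push Not at hlt
      rcases eq_or_lt_of_le hu.2 with he | hl
      · subst he
        exact absurd hlt (not_lt.2 (hn.2 hu))
      have hcw : ContinuousWithinAt (fun u => ‖Z (r + u) ω - Z r ω‖ ^ 2) (Set.Ioi u) u := by
        have h1 : ContinuousWithinAt (fun u => Z (r + u) ω) (Set.Ioi u) u := by
          have := hc ω (r + u)
          refine ContinuousWithinAt.comp (t := Set.Ici (r + u)) (f := fun u => r + u) this
            (by fun_prop) ?_
          intro x hx
          simp only [Set.mem_Ioi, Set.mem_Ici] at *
          linarith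
        exact ((h1.sub continuousWithinAt_const).norm).pow 2
      have h2 := hcw.eventually (lt_mem_nhds hlt)
      obtain ⟨w, hw, hw'⟩ := (mem_nhdsGT_iff_exists_Ioo_subset).1 h2
      obtain ⟨p, hp1, hp2⟩ := exists_rat_btwn (lt_min (Set.mem_Ioi.1 hw) hl)
      have h3 : a < ‖Z (r + (p:ℝ)) ω - Z r ω‖ ^ 2 := hw' ⟨hp1, hp2.trans_le (min_le_left _ _)⟩
      exact absurd h3 (not_lt.2 (hn.1 ⟨p, hu.1.trans hp1, (hp2.trans_le (min_le_right _ _)).le⟩))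
    · rintro (⟨p, hp⟩ | ⟨hv, h⟩)
      · exact hp.trans_le (le_gOsc (fun t => Z t ω) B (fun t => hB t ω) r v _ p.2)
      · exact h.trans_le (le_gOsc (fun t => Z t ω) B (fun t => hB t ω) r v _ hv)
  rw [this]
  exact (MeasurableSet.iUnion fun p => hM _).union (MeasurableSet.iUnion fun _ => hM _)

/-- Points where the oscillation of `f` is at least `ε`. -/
def oscSet {E : Type*} [NormedAddCommGroup E] (f : ℝ → E) (ε : ℝ) : Set ℝ :=
  {x | ¬ ∃ δ > 0, ∀ y z, |y - x| < δ → |z - x| < δ → ‖f y - f z‖ < ε}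

lemma oscSet_countable {E : Type*} [NormedAddCommGroup E] (f : ℝ → E)
    (hc : ∀ t, ContinuousWithinAt f (Set.Ici t) t) (ε : ℝ) (hε : 0 < ε) :
    (oscSet f ε).Countable := by
  have key := countable_setOfPred_isolated_right_within (s := oscSet f ε)
  refine key.mono ?_
  intro x hx
  refine ⟨hx, ?_⟩
  obtain ⟨δ, hδ, h⟩ := Metric.continuousWithinAt_iff.1 (hc x) (ε / 2) (by positivity)
  rw [← empty_mem_iff_bot, mem_nhdsWithin]
  refine ⟨Set.Iio (x + δ), isOpen_Iio, by simp [hδ], ?_⟩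
  rintro y ⟨hy, hyD, hxy⟩
  simp only [Set.mem_Iio, Set.mem_Ioi] at hy hxy
  refine hyD ⟨min (y - x) (x + δ - y), lt_min (by linarith) (by linarith), ?_⟩
  have hh : ∀ z, |z - y| < min (y - x) (x + δ - y) → ‖f z - f x‖ < ε / 2 := by
    intro z hz
    obtain ⟨h1, h2⟩ := lt_min_iff.1 hz
    rw [abs_lt] at h1 h2
    rw [← dist_eq_norm]
    refine h (Set.mem_Ici.2 (by linarith)) ?_
    rw [Real.dist_eq, abs_lt]
    constructor <;> linarith
  intro a b ha hb
  have h1 := hh a ha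
  have h2 := hh b hb
  have := norm_sub_le_norm_sub_add_norm_sub (f a) (f x) (f b)
  rw [norm_sub_rev (f x) (f b)] at this
  linarith

lemma path_tendsto {E : Type*} [NormedAddCommGroup E] (f : ℝ → E)
    (hc : ∀ t, ContinuousWithinAt f (Set.Ici t) t) (B : ℝ) (hB : ∀ t, ‖f t‖ ≤ B) (t : ℝ)
    (ht : 0 < t)
    (Δ : ℕ → ℝ) (hΔpos : ∀ n, 0 < Δ n) (hΔ : Tendsto Δ atTop (nhds 0))
    (v : ℕ → ℝ) (hv : Tendsto v atTop (nhds 0)) :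
    Tendsto (fun n => Δ n * ∑ i ∈ Finset.range ⌊t / Δ n⌋₊, gOsc f (i * Δ n) (v n))
      atTop (nhds 0) := by
  have hae : ∀ᵐ s : ℝ, ∀ k : ℕ, s ∉ oscSet f (1 / ((k:ℝ) + 1)) := by
    rw [ae_all_iff]
    intro k
    exact (oscSet_countable f hc _ (by positivity)).ae_notMem volume
  have hmeas : ∀ n, Measurable (fun s : ℝ => gOsc f (⌊s / Δ n⌋₊ * Δ n) (v n)) := by
    intro n
    have h1 : Measurable (fun k : ℕ => gOsc f (k * Δ n) (v n)) := measurable_of_countable _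
    exact h1.comp (Nat.measurable_floor.comp (measurable_id.div_const _))
  have hint : ∀ n a b, IntervalIntegrable (fun s : ℝ => gOsc f (⌊s / Δ n⌋₊ * Δ n) (v n))
      volume a b := by
    intro n a b
    refine (intervalIntegrable_const (c := (2 * B) ^ 2)).mono_fun
      (hmeas n).aestronglyMeasurable ?_
    refine Eventually.of_forall fun s => ?_
    beta_reduce
    rw [Real.norm_of_nonneg (gOsc_nonneg _ _ _), Real.norm_of_nonneg (by positivity)]
    exact gOsc_le_bd f B hB _ _
  have hlim : Tendsto (fun n => ∫ s in (0:ℝ)..t, gOsc f (⌊s / Δ n⌋₊ * Δ n) (v n)) atTop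
      (nhds (∫ s in (0:ℝ)..t, (0:ℝ))) := by
    refine intervalIntegral.tendsto_integral_filter_of_dominated_convergence
      (fun _ => (2 * B) ^ 2) ?_ ?_ intervalIntegrable_const ?_
    · exact Eventually.of_forall fun n => (hmeas n).aestronglyMeasurable
    · refine Eventually.of_forall fun n => Eventually.of_forall fun s _ => ?_
      rw [Real.norm_of_nonneg (gOsc_nonneg _ _ _)]
      exact gOsc_le_bd f B hB _ _
    · filter_upwards [hae] with s hs hst
      rw [Set.uIoc_of_le ht.le] at hst
      rw [Metric.tendsto_atTop']
      intro ε hε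
      obtain ⟨k, hk⟩ := exists_nat_one_div_lt (lt_min hε one_pos)
      have hk0 : (0:ℝ) < 1 / ((k:ℝ) + 1) := by positivity
      have hs' := hs k
      simp only [oscSet, Set.mem_ofPred_eq, not_not] at hs'
      obtain ⟨δ, hδ, h⟩ := hs'
      have e1 := hΔ.eventually (gt_mem_nhds (half_pos hδ))
      have e2 := hv.eventually (gt_mem_nhds (half_pos hδ))
      obtain ⟨N, hN⟩ := eventually_atTop.1 (e1.and e2)
      refine ⟨N, fun n hn => ?_⟩
      obtain ⟨h1, h2⟩ := hN n hn.le
      rw [Real.dist_eq, sub_zero, abs_of_nonneg (gOsc_nonneg _ _ _)]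
      have hp := hΔpos n
      have f1 : (⌊s / Δ n⌋₊ : ℝ) * Δ n ≤ s := by
        rw [← le_div_iff₀ hp]
        exact Nat.floor_le (div_nonneg hst.1.le hp.le)
      have f2 : s < ((⌊s / Δ n⌋₊ : ℝ) + 1) * Δ n := by
        rw [← div_lt_iff₀ hp]
        exact Nat.lt_floor_add_one _
      refine lt_of_le_of_lt (gOsc_le f _ _ (1 / ((k:ℝ) + 1)) hk0.le ?_)
        (hk.trans_le (min_le_left _ _))
      intro u hu
      have hu1 := hu.1
      have hu2 := hu.2
      have h3 := h ((⌊s / Δ n⌋₊ : ℝ) * Δ n + u) ((⌊s / Δ n⌋₊ : ℝ) * Δ n)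
        (by rw [abs_lt]; constructor <;> linarith) (by rw [abs_lt]; constructor <;> linarith)
      have h4 := hk.trans_le (min_le_right _ _)
      have h5 := norm_nonneg (f ((⌊s / Δ n⌋₊ : ℝ) * Δ n + u) - f ((⌊s / Δ n⌋₊ : ℝ) * Δ n))
      nlinarith
  rw [intervalIntegral.integral_zero] at hlim
  refine squeeze_zero ?_ ?_ hlim
  · intro n
    exact mul_nonneg (hΔpos n).le (Finset.sum_nonneg fun _ _ => gOsc_nonneg _ _ _)
  · intro n
    have hp := hΔpos n
    have hsum := intervalIntegral.sum_integral_adjacent_intervals (μ := volume)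
      (a := fun k : ℕ => (k:ℝ) * Δ n) (n := ⌊t / Δ n⌋₊) (fun k _ => hint n (k * Δ n) ((k+1 : ℕ) * Δ n))
    have hle : (⌊t / Δ n⌋₊ : ℝ) * Δ n ≤ t := by
      rw [← le_div_iff₀ hp]
      exact Nat.floor_le (div_nonneg ht.le hp.le)
    have hmono := intervalIntegral.integral_mono_interval (μ := volume) (c := 0) (a := 0)
      (b := (⌊t / Δ n⌋₊ : ℝ) * Δ n) (d := t) le_rfl (by positivity) hle
      (Eventually.of_forall fun s => gOsc_nonneg f (⌊s / Δ n⌋₊ * Δ n) (v n)) (hint n 0 t)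
    refine le_trans (le_of_eq ?_) hmono
    simp only [Nat.cast_zero, zero_mul] at hsum
    rw [← hsum, Finset.mul_sum]
    refine Finset.sum_congr rfl fun k _ => ?_
    have hkk : (k:ℝ) * Δ n ≤ ((k+1 : ℕ):ℝ) * Δ n := by push_cast; nlinarith
    rw [intervalIntegral.integral_of_le hkk, integral_Ioc_eq_integral_Ioo]
    rw [setIntegral_congr_fun (g := fun _ => gOsc f (k * Δ n) (v n)) measurableSet_Ioo]
    · rw [setIntegral_const, smul_eq_mul, Real.volume_real_Ioo_of_le hkk]
      push_cast
      ring
    · intro s hs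
      have : ⌊s / Δ n⌋₊ = k := by
        rw [Nat.floor_eq_iff (div_nonneg (le_trans (by positivity) hs.1.le) hp.le)]
        rw [le_div_iff₀ hp, div_lt_iff₀ hp]
        have := hs.2
        push_cast at this
        exact ⟨hs.1.le, this⟩
      simp only [this]

/-- For a bounded adapted càdlàg process `Z` and sequences `Δ_n → 0`, `v_n → 0`,
`Δ_n · E( Σ_{i=1}^{⌊t/Δ_n⌋} η(Z)_{(i−1)Δ_n, v_n} ) → 0`. -/
theorem stmt10 {Ω : Type*} {m0 : MeasurableSpace Ω} (μ : Measure Ω) [IsProbabilityMeasure μ]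
    (F : Filtration ℝ m0) (q : ℕ) (Z : ℝ → Ω → EuclideanSpace ℝ (Fin q))
    (hadapted : Adapted F Z)
    (B : ℝ) (hbound : ∀ t ω, ‖Z t ω‖ ≤ B)
    (hcadlag : ∀ ω, Cadlag fun t => Z t ω)
    (t : ℝ) (ht : 0 < t)
    (Δ : ℕ → ℝ) (hΔpos : ∀ n, 0 < Δ n) (hΔ : Tendsto Δ atTop (nhds 0))
    (v : ℕ → ℝ) (hv0 : ∀ n, 0 ≤ v n) (hv : Tendsto v atTop (nhds 0)) :
    Tendsto
      (fun n => Δ n *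
        ∫ ω, (∑ i ∈ Finset.Icc 1 ⌊t / Δ n⌋₊, eta μ F Z (((i : ℝ) - 1) * Δ n) (v n) ω) ∂μ)
      atTop (nhds 0) := by
  have hm : ∀ r w, Measurable (fun ω => gOsc (fun t => Z t ω) r w) :=
    gOsc_measurable Z (fun t => (hadapted t).mono (F.le t) le_rfl) B hbound
      (fun ω => (hcadlag ω).1)
  have hi : ∀ r w, Integrable (fun ω => gOsc (fun t => Z t ω) r w) μ := fun r w =>
    Integrable.of_bound (hm r w).aestronglyMeasurable ((2 * B) ^ 2) (Eventually.of_forall fun ω => by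
      rw [Real.norm_of_nonneg (gOsc_nonneg _ _ _)]
      exact gOsc_le_bd _ B (fun t => hbound t ω) _ _)
  have hNt : ∀ n, Δ n * (⌊t / Δ n⌋₊ : ℝ) ≤ t := fun n => by
    rw [mul_comm, ← le_div_iff₀ (hΔpos n)]
    exact Nat.floor_le (div_nonneg ht.le (hΔpos n).le)
  have hre : ∀ (N : ℕ) (φ : ℝ → ℝ), ∑ i ∈ Finset.Icc 1 N, φ ((i:ℝ) - 1) =
      ∑ i ∈ Finset.range N, φ i := by
    intro N φ
    induction N with
    | zero => simp
    | succ N ih =>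
      rw [Finset.sum_Icc_succ_top (by omega), Finset.sum_range_succ, ih]
      simp
  -- convergence of the integrals of the oscillations
  have hL : Tendsto (fun n => ∫ ω, Δ n * ∑ i ∈ Finset.range ⌊t / Δ n⌋₊,
      gOsc (fun t => Z t ω) (i * Δ n) (v n) ∂μ) atTop (nhds (∫ _, (0:ℝ) ∂μ)) := by
    refine tendsto_integral_of_dominated_convergence (fun _ => t * (2 * B) ^ 2) ?_
      (integrable_const _) ?_ ?_
    · intro n
      exact ((Finset.measurable_sum _ fun i _ => hm _ _).const_mul _).aestronglyMeasurable
    · intro n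
      refine Eventually.of_forall fun ω => ?_
      rw [Real.norm_of_nonneg (mul_nonneg (hΔpos n).le
        (Finset.sum_nonneg fun _ _ => gOsc_nonneg _ _ _))]
      have h1 : ∑ i ∈ Finset.range ⌊t / Δ n⌋₊, gOsc (fun t => Z t ω) (i * Δ n) (v n) ≤
          ⌊t / Δ n⌋₊ * (2 * B) ^ 2 := by
        refine (Finset.sum_le_sum fun i _ => gOsc_le_bd _ B (fun t => hbound t ω) _ _).trans ?_
        simp
      calc _ ≤ Δ n * (⌊t / Δ n⌋₊ * (2 * B) ^ 2) := mul_le_mul_of_nonneg_left h1 (hΔpos n).le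
        _ = (Δ n * ⌊t / Δ n⌋₊) * (2 * B) ^ 2 := by ring
        _ ≤ _ := mul_le_mul_of_nonneg_right (hNt n) (by positivity)
    · exact Eventually.of_forall fun ω => path_tendsto _ (hcadlag ω).1 B (fun t => hbound t ω) t ht
        Δ hΔpos hΔ v hv
  rw [integral_zero] at hL
  -- the main inequality
  have hmain : ∀ ε > 0, ∀ n, Δ n *
        ∫ ω, (∑ i ∈ Finset.Icc 1 ⌊t / Δ n⌋₊, eta μ F Z (((i : ℝ) - 1) * Δ n) (v n) ω) ∂μ ≤
      t * ε + ε⁻¹ * ∫ ω, Δ n * ∑ i ∈ Finset.range ⌊t / Δ n⌋₊,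
      gOsc (fun t => Z t ω) (i * Δ n) (v n) ∂μ := by
    intro ε hε n
    have hp := hΔpos n
    have h1 : ∫ ω, (∑ i ∈ Finset.Icc 1 ⌊t / Δ n⌋₊, eta μ F Z (((i : ℝ) - 1) * Δ n) (v n) ω) ∂μ ≤
        ∫ ω, (∑ i ∈ Finset.range ⌊t / Δ n⌋₊, (ε + ε⁻¹ *
          (μ[(fun ω' => gOsc (fun t => Z t ω') (i * Δ n) (v n)) | F (i * Δ n)]) ω)) ∂μ := by
      refine integral_mono_of_nonneg ?_ ?_ ?_
      · exact Eventually.of_forall fun ω => Finset.sum_nonneg fun _ _ => Real.sqrt_nonneg _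
      · exact integrable_finset_sum _ fun i _ =>
          (integrable_const _).add (integrable_condExp.const_mul _)
      · have hnn : ∀ᵐ ω ∂μ, ∀ i : ℕ,
            0 ≤ (μ[(fun ω' => gOsc (fun t => Z t ω') (i * Δ n) (v n)) | F (i * Δ n)]) ω := by
          rw [ae_all_iff]
          intro i
          exact condExp_nonneg (Eventually.of_forall fun ω => gOsc_nonneg _ _ _)
        filter_upwards [hnn] with ω hω
        rw [hre _ (fun x => eta μ F Z (x * Δ n) (v n) ω)]
        refine Finset.sum_le_sum fun i _ => ?_
        have h0 := hω i
        change Real.sqrt ((μ[(fun ω' => gOsc (fun t => Z t ω') (i * Δ n) (v n)) | F (i * Δ n)]) ω) ≤ _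
        generalize (μ[(fun ω' => gOsc (fun t => Z t ω') (i * Δ n) (v n)) | F (i * Δ n)]) ω = x at *
        rw [Real.sqrt_le_left (by positivity)]
        have : ε * (ε⁻¹ * x) = x := by field_simp
        nlinarith [sq_nonneg (ε⁻¹ * x), sq_nonneg ε]
    have h2 : ∫ ω, (∑ i ∈ Finset.range ⌊t / Δ n⌋₊, (ε + ε⁻¹ *
          (μ[(fun ω' => gOsc (fun t => Z t ω') (i * Δ n) (v n)) | F (i * Δ n)]) ω)) ∂μ =
        ⌊t / Δ n⌋₊ * ε + ε⁻¹ * ∑ i ∈ Finset.range ⌊t / Δ n⌋₊,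
          ∫ ω, gOsc (fun t => Z t ω) (i * Δ n) (v n) ∂μ := by
      rw [integral_finset_sum _ fun i _ =>
          (integrable_const _).add (integrable_condExp.const_mul _)]
      rw [Finset.mul_sum]
      have : (⌊t / Δ n⌋₊ : ℝ) * ε = ∑ i ∈ Finset.range ⌊t / Δ n⌋₊, ε := by simp
      rw [this, ← Finset.sum_add_distrib]
      refine Finset.sum_congr rfl fun i _ => ?_
      rw [integral_add (integrable_const _) (integrable_condExp.const_mul _), integral_const_mul,
        integral_condExp (F.le _)]
      simp
    rw [integral_const_mul, integral_finset_sum _ fun i _ => hi _ _]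
    rw [h2] at h1
    have h3 := mul_le_mul_of_nonneg_left h1 hp.le
    have h4 := mul_le_mul_of_nonneg_right (hNt n) hε.le
    refine h3.trans ?_
    linarith
  rw [Metric.tendsto_atTop']
  intro δ hδ
  have hε : 0 < δ / (2 * t) := by positivity
  have hL2 := hL.const_mul (δ / (2 * t))⁻¹
  rw [mul_zero] at hL2
  obtain ⟨N, hN⟩ := eventually_atTop.1 (hL2.eventually (gt_mem_nhds (half_pos hδ)))
  refine ⟨N, fun n hn => ?_⟩
  have h1 := hmain _ hε n
  have h2 := hN n hn.le
  rw [Real.dist_eq, sub_zero, abs_of_nonneg]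
  · have : t * (δ / (2 * t)) = δ / 2 := by field_simp
    linarith
  · exact mul_nonneg (hΔpos n).le (integral_nonneg fun ω =>
      Finset.sum_nonneg fun _ _ => Real.sqrt_nonneg _)
end

section
/- Let (Ω, F, (F_t)_{t≥0}, P) be a filtered probability space, A > 0, and let Y be an adapted ℝ^d-valued process with right-continuous paths and Y_0 = 0. Let b be an adapted ℝ^d-valued process with càdlàg paths and ‖b_t‖ ≤ A for all t, and assume that M_t := Y_t − ∫_0^t b_s ds is a martingale. Then for all t ∈ (0,1], almost surely, ‖ E(Y_t | F_0) − t b_0 ‖ ≤ t · η(b)_{0,t} ≤ 2At, where η(b)_{0,t} := sqrt( E( sup_{0 < u ≤ t} ‖b_u − b_0‖² | F_0 ) ). -/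
open MeasureTheory Filter

theorem aux_tendsto (s : ℝ) :
    Tendsto (fun n : ℕ => ((⌊((n:ℝ) + 1) * s⌋ : ℝ) + 1) / ((n:ℝ) + 1)) atTop
      (nhdsWithin s (Set.Ici s)) := by
  apply tendsto_nhdsWithin_iff.2
  refine ⟨?_, ?_⟩
  · have h1 : Tendsto (fun n : ℕ => s + 1 / ((n:ℝ) + 1)) atTop (nhds s) := by
      simpa using (tendsto_const_nhds (x := s)).add (tendsto_one_div_add_atTop_nhds_zero_nat (𝕜 := ℝ))
    refine tendsto_of_tendsto_of_tendsto_of_le_of_le tendsto_const_nhds h1 ?_ ?_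
    · intro n
      have hn : (0:ℝ) < (n:ℝ) + 1 := by positivity
      have := Int.lt_floor_add_one (((n:ℝ) + 1) * s)
      simp only
      rw [le_div_iff₀ hn]
      linarith
    · intro n
      have hn : (0:ℝ) < (n:ℝ) + 1 := by positivity
      have := Int.floor_le (((n:ℝ) + 1) * s)
      have h3 : s + 1 / ((n:ℝ) + 1) = (((n:ℝ) + 1) * s + 1) / ((n:ℝ) + 1) := by
        field_simp
      simp only
      rw [h3]
      gcongr
  · refine Eventually.of_forall fun n => ?_
    have hn : (0:ℝ) < (n:ℝ) + 1 := by positivity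
    have := Int.lt_floor_add_one (((n:ℝ) + 1) * s)
    rw [Set.mem_Ici, le_div_iff₀ hn]
    linarith

theorem aux_measurable {d : ℕ} (f : ℝ → EuclideanSpace ℝ (Fin d))
    (hf : ∀ t : ℝ, ContinuousWithinAt f (Set.Ici t) t) : Measurable f := by
  refine measurable_of_tendsto_metrizable
    (f := fun n : ℕ => fun s => f (((⌊((n:ℝ) + 1) * s⌋ : ℝ) + 1) / ((n:ℝ) + 1))) ?_ ?_
  · intro n
    have h1 : Measurable fun k : ℤ => f (((k : ℝ) + 1) / ((n:ℝ) + 1)) := measurable_from_top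
    exact h1.comp (Int.measurable_floor.comp (measurable_id.const_mul _))
  · rw [tendsto_pi_nhds]
    intro s
    exact Tendsto.comp (hf s) (aux_tendsto s)

theorem aux_le {d : ℕ} (A : ℝ) (f : ℝ → EuclideanSpace ℝ (Fin d)) (hb : ∀ t, ‖f t‖ ≤ A) (u : ℝ) :
    ‖f u - f 0‖ ^ 2 ≤ (2 * A) ^ 2 := by
  have h1 := norm_sub_le (f u) (f 0)
  have := hb u
  have := hb 0
  have := norm_nonneg (f u - f 0)
  gcongr
  linarith

theorem aux_inner (g : ℝ → ℝ) (B t : ℝ) (hg : ∀ u, g u ≤ B) (hB : 0 ≤ B) (u : ℝ) :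
    (⨆ _ : u ∈ Set.Ioc (0:ℝ) t, g u) ≤ B :=
  Real.iSup_le (fun _ => hg u) hB

theorem aux_bdd (g : ℝ → ℝ) (B t : ℝ) (hg : ∀ u, g u ≤ B) (hB : 0 ≤ B) :
    BddAbove (Set.range fun u => ⨆ _ : u ∈ Set.Ioc (0:ℝ) t, g u) := by
  refine ⟨B, ?_⟩
  rintro _ ⟨u, rfl⟩
  exact aux_inner g B t hg hB u

theorem aux_le_sup (g : ℝ → ℝ) (B t : ℝ) (hg : ∀ u, g u ≤ B) (hB : 0 ≤ B) (u : ℝ)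
    (hu : u ∈ Set.Ioc (0:ℝ) t) : g u ≤ ⨆ u ∈ Set.Ioc (0:ℝ) t, g u := by
  have := le_ciSup (aux_bdd g B t hg hB) u
  simpa only [ciSup_pos hu] using this

theorem aux_sup_eq (g : ℝ → ℝ) (B t : ℝ) (ht : 0 < t) (hg0 : ∀ u, 0 ≤ g u)
    (hg : ∀ u, g u ≤ B) (hB : 0 ≤ B)
    (hc : ∀ u : ℝ, ContinuousWithinAt g (Set.Ici u) u) :
    (⨆ u ∈ Set.Ioc (0:ℝ) t, g u) = ⨆ q : {q : ℚ // 0 < q}, g (min (q.1 : ℝ) t) := by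
  have hbdd : BddAbove (Set.range fun q : {q : ℚ // 0 < q} => g (min (q.1 : ℝ) t)) := by
    refine ⟨B, ?_⟩
    rintro _ ⟨q, rfl⟩
    exact hg _
  have hnn : 0 ≤ ⨆ q : {q : ℚ // 0 < q}, g (min (q.1 : ℝ) t) := Real.iSup_nonneg fun q => hg0 _
  apply le_antisymm
  · refine Real.iSup_le (fun u => Real.iSup_le (fun hu => ?_) hnn) hnn
    rcases hu.2.eq_or_lt with h | h
    · obtain ⟨q, hq⟩ := exists_rat_gt t
      have hq0 : (0:ℚ) < q := by exact_mod_cast ht.trans hq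
      have := le_ciSup hbdd ⟨q, hq0⟩
      simp only [min_eq_right hq.le] at this
      rwa [h]
    · by_contra hcon
      push Not at hcon
      have h1 : ∀ᶠ v in nhdsWithin u (Set.Ici u),
          (⨆ q : {q : ℚ // 0 < q}, g (min (q.1 : ℝ) t)) < g v := (hc u).eventually_const_lt hcon
      have h2 : ∀ᶠ v in nhdsWithin u (Set.Ioi u),
          (⨆ q : {q : ℚ // 0 < q}, g (min (q.1 : ℝ) t)) < g v :=
        h1.filter_mono (nhdsWithin_mono _ Set.Ioi_subset_Ici_self)
      obtain ⟨w, hw, hw2⟩ := (mem_nhdsGT_iff_exists_Ioo_subset' h).1 h2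
      obtain ⟨q, hq1, hq2⟩ := exists_rat_btwn (show u < min w t from lt_min hw h)
      have hq0 : (0:ℚ) < q := by exact_mod_cast hu.1.trans hq1
      have h3 := hw2 (show (q:ℝ) ∈ Set.Ioo u w from ⟨hq1, hq2.trans_le (min_le_left _ _)⟩)
      have h4 := le_ciSup hbdd ⟨q, hq0⟩
      simp only [min_eq_left (hq2.trans_le (min_le_right _ _)).le] at h4
      exact absurd h3 (not_lt.2 h4)
  · have : Nonempty {q : ℚ // 0 < q} := ⟨⟨1, one_pos⟩⟩
    refine ciSup_le fun q => aux_le_sup g B t hg hB _ ⟨lt_min ?_ ht, min_le_right _ _⟩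
    exact_mod_cast q.2

/-- If `Y` is adapted and right-continuous with `Y_0 = 0`, `b` is adapted càdlàg with
`‖b_t‖ ≤ A`, and `M_t = Y_t − ∫_0^t b_s ds` is a martingale, then for `t ∈ (0,1]`,
`‖E(Y_t | F_0) − t b_0‖ ≤ t η(b)_{0,t} ≤ 2At` almost surely. -/
theorem stmt11 {Ω : Type*} {m0 : MeasurableSpace Ω} (μ : Measure Ω) [IsProbabilityMeasure μ]
    (F : Filtration ℝ m0) (d : ℕ) (A : ℝ) (hA : 0 < A)
    (Y : ℝ → Ω → EuclideanSpace ℝ (Fin d))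
    (hYadapted : Adapted F Y)
    (hYrc : ∀ ω, ∀ t : ℝ, ContinuousWithinAt (fun s => Y s ω) (Set.Ici t) t)
    (hY0 : ∀ ω, Y 0 ω = 0)
    (b : ℝ → Ω → EuclideanSpace ℝ (Fin d))
    (hbadapted : Adapted F b)
    (hbcadlag : ∀ ω, Cadlag fun t => b t ω)
    (hbbound : ∀ t ω, ‖b t ω‖ ≤ A)
    (M : ℝ → Ω → EuclideanSpace ℝ (Fin d))
    (hMdef : ∀ t : ℝ, ∀ ω, M t ω = Y t ω - ∫ s in (0:ℝ)..t, b s ω)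
    (hMart : ∀ s t : ℝ, 0 ≤ s → s ≤ t →
      Integrable (M t) μ ∧ μ[M t | F s] =ᵐ[μ] M s) :
    ∀ t : ℝ, 0 < t → t ≤ 1 →
      ∀ᵐ ω ∂μ,
        ‖(μ[Y t | F 0]) ω - t • b 0 ω‖ ≤ t * eta μ F b 0 t ω ∧
        t * eta μ F b 0 t ω ≤ 2 * A * t := by
  intro t ht0 _
  have hm := F.le 0
  have hbm : ∀ s, Measurable (b s) := fun s => (hbadapted s).mono (F.le s) le_rfl
  have hpath : ∀ ω, Measurable fun s => b s ω := fun ω => aux_measurable _ (hbcadlag ω).1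
  have hii : ∀ ω, IntervalIntegrable (fun s => b s ω) volume 0 t := fun ω => by
    refine (intervalIntegrable_const (c := A)).mono_fun (hpath ω).aestronglyMeasurable ?_
    refine Eventually.of_forall fun s => ?_
    simpa [abs_of_pos hA] using hbbound s ω
  set S : Ω → ℝ := fun ω => ⨆ u ∈ Set.Ioc (0:ℝ) t, ‖b (0 + u) ω - b 0 ω‖ ^ 2 with hS
  have hS' : ∀ ω, S ω = ⨆ u ∈ Set.Ioc (0:ℝ) t, ‖b u ω - b 0 ω‖ ^ 2 := fun ω => by
    simp only [hS, zero_add]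
  have hgb : ∀ ω u, ‖b u ω - b 0 ω‖ ^ 2 ≤ (2 * A) ^ 2 := fun ω u =>
    aux_le A (fun s => b s ω) (fun s => hbbound s ω) u
  have hB : 0 ≤ (2 * A) ^ 2 := sq_nonneg _
  have hSmeas : Measurable S := by
    have : S = fun ω => ⨆ q : {q : ℚ // 0 < q}, ‖b (min (q.1 : ℝ) t) ω - b 0 ω‖ ^ 2 := by
      funext ω
      rw [hS' ω]
      refine aux_sup_eq (fun u => ‖b u ω - b 0 ω‖ ^ 2) _ t ht0 (fun u => sq_nonneg _) (hgb ω) hB ?_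
      intro u
      exact ((((hbcadlag ω).1 u).sub continuousWithinAt_const).norm).pow 2
    rw [this]
    exact Measurable.iSup fun q => (((hbm _).sub (hbm 0)).norm).pow_const 2
  have hS0 : ∀ ω, 0 ≤ S ω := fun ω =>
    Real.iSup_nonneg fun u => Real.iSup_nonneg fun _ => sq_nonneg _
  have hSB : ∀ ω, S ω ≤ (2 * A) ^ 2 := fun ω => by
    rw [hS' ω]
    exact Real.iSup_le (fun u => Real.iSup_le (fun _ => hgb ω u) hB) hB
  have hSint : Integrable S μ := by
    refine Integrable.of_bound hSmeas.aestronglyMeasurable ((2 * A) ^ 2)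
      (Eventually.of_forall fun ω => ?_)
    rw [Real.norm_eq_abs, abs_of_nonneg (hS0 ω)]
    exact hSB ω
  set D : Ω → EuclideanSpace ℝ (Fin d) := fun ω => (∫ s in (0:ℝ)..t, b s ω) - t • b 0 ω with hD
  have hDb : ∀ ω, ‖D ω‖ ≤ t * Real.sqrt (S ω) := fun ω => by
    have h1 : D ω = ∫ s in (0:ℝ)..t, (b s ω - b 0 ω) := by
      rw [intervalIntegral.integral_sub (hii ω) intervalIntegrable_const]
      simp [hD]
    rw [h1]
    have h2 := intervalIntegral.norm_integral_le_of_norm_le_const (a := 0) (b := t)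
      (f := fun s => b s ω - b 0 ω) (C := Real.sqrt (S ω)) ?_
    · rw [sub_zero, abs_of_pos ht0] at h2
      linarith
    · intro s hs
      rw [Set.uIoc_of_le ht0.le] at hs
      apply Real.le_sqrt_of_sq_le
      rw [hS' ω]
      exact aux_le_sup (fun u => ‖b u ω - b 0 ω‖ ^ 2) _ t (hgb ω) hB s hs
  have hMint : Integrable (M t) μ := (hMart 0 t le_rfl ht0.le).1
  have hM0 : μ[M t | F 0] =ᵐ[μ] M 0 := (hMart 0 t le_rfl ht0.le).2
  have hM0' : ∀ ω, M 0 ω = 0 := fun ω => by simp [hMdef, hY0]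
  have hYm : Measurable (Y t) := (hYadapted t).mono (F.le t) le_rfl
  have hDeq : D = fun ω => Y t ω - M t ω - t • b 0 ω := by
    funext ω
    simp [hD, hMdef]
  have hDm : AEStronglyMeasurable D μ := by
    rw [hDeq]
    exact (hYm.aestronglyMeasurable.sub hMint.aestronglyMeasurable).sub
      ((hbm 0).aestronglyMeasurable.const_smul t)
  have hDsq : ∀ ω, ‖D ω‖ ^ 2 ≤ t ^ 2 * S ω := fun ω => by
    have := pow_le_pow_left₀ (norm_nonneg _) (hDb ω) 2
    rwa [mul_pow, Real.sq_sqrt (hS0 ω)] at this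
  have hDint : Integrable D μ := by
    refine Integrable.of_bound hDm (t * Real.sqrt ((2 * A) ^ 2))
      (Eventually.of_forall fun ω => (hDb ω).trans ?_)
    gcongr
    exact hSB ω
  have hD2int : Integrable (fun ω => ‖D ω‖ ^ (2:ℝ)) μ := by
    have : Integrable (fun ω => t ^ 2 * S ω) μ := hSint.const_mul _
    simp only [Real.rpow_two]
    refine this.mono' (hDm.norm.pow 2) (Eventually.of_forall fun ω => ?_)
    rw [Real.norm_eq_abs, abs_of_nonneg (sq_nonneg _)]
    exact hDsq ω
  have hb0int : Integrable (fun ω => t • b 0 ω) μ := by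
    refine Integrable.smul t (Integrable.of_bound (hbm 0).aestronglyMeasurable A
      (Eventually.of_forall fun ω => hbbound 0 ω))
  have hb0c : μ[fun ω => t • b 0 ω | F 0] = fun ω => t • b 0 ω :=
    condExp_of_stronglyMeasurable hm
      ((Measurable.stronglyMeasurable (hbadapted 0)).const_smul t) hb0int
  have hYdec : Y t = (M t + D) + fun ω => t • b 0 ω := by
    funext ω
    simp only [hDeq, Pi.add_apply]
    abel
  have e1 := condExp_add (hMint.add hDint) hb0int (F 0)
  have e2 := condExp_add hMint hDint (F 0)
  rw [← hYdec, hb0c] at e1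
  have e3 := Integrable.norm_condExp_rpow_le (m := F 0) (f := D) one_le_two hD2int
  have e4 : μ[fun ω => ‖D ω‖ ^ (2:ℝ) | F 0] ≤ᵐ[μ] μ[fun ω => t ^ 2 * S ω | F 0] :=
    condExp_mono hD2int (hSint.const_mul _) (Eventually.of_forall fun ω => by
      simpa only [Real.rpow_two] using hDsq ω)
  have e5 : μ[fun ω => t ^ 2 * S ω | F 0] =ᵐ[μ] fun ω => t ^ 2 * (μ[S | F 0]) ω :=
    condExp_smul (t ^ 2) S (F 0)
  have e6 : μ[S | F 0] ≤ᵐ[μ] μ[fun _ => (2 * A) ^ 2 | F 0] :=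
    condExp_mono hSint (integrable_const _) (Eventually.of_forall hSB)
  rw [condExp_const hm] at e6
  filter_upwards [e1, e2, e3, e4, e5, e6, hM0] with ω h1 h2 h3 h4 h5 h6 h7
  have heta : eta μ F b 0 t ω = Real.sqrt ((μ[S | F 0]) ω) := rfl
  rw [heta]
  constructor
  · have hz : (μ[Y t | F 0]) ω - t • b 0 ω = (μ[D | F 0]) ω := by
      rw [h1, Pi.add_apply, h2, Pi.add_apply, h7, hM0']
      simp
    rw [hz]
    rw [Real.rpow_two] at h3
    have h8 : ‖(μ[D | F 0]) ω‖ ^ 2 ≤ t ^ 2 * (μ[S | F 0]) ω := by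
      rw [← h5]
      exact h3.trans h4
    have h9 := Real.le_sqrt_of_sq_le h8
    rwa [Real.sqrt_mul (sq_nonneg t), Real.sqrt_sq ht0.le] at h9
  · have h10 : Real.sqrt ((μ[S | F 0]) ω) ≤ 2 * A := by
      rw [Real.sqrt_le_left (by positivity)]
      exact h6
    nlinarith
end
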